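/- Assume: (1) θ*_i ≠ θ*_j for all i ≠ j; (2) x_kᵀ(θ*_i − θ*_j) ≠ 0 for every k ∈ {1,…,N} and every pair i ≠ j; (3) for each s ∈ {1,…,S}, every subset A ⊆ C*_s with exactly n elements has an invertible Gram matrix ∑_{k∈A} x_k x_kᵀ; and (4) the cardinalities satisfy |C*_s| = n + (n−1)(S − s) for s = 1,…,S, so that N = ∑_{s=1}^S |C*_s| = ((n−1)S² + (n+1)S)/2. Then the regressors and membership indices are persistently exciting for the SL system: for any θ_1,…,θ_S ∈ ℝⁿ and any ζ : {1,…,N} → {1,…,S} with y_k = x_kᵀθ_{ζ_k} for all k, there exists a permutation σ of {1,…,S} such that θ_{σ(s)} = θ*_s for all s and ζ_k = σ(ζ*_k) for all k. -/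

import Mathlib

open Matrix Finset

/-!
The subsystems are recovered one at a time, in decreasing order of their number of samples.

Suppose each `θs t` with `t < s` is already known to occur among the `θ j`. A sample `k` of
subsystem `s` cannot be assigned by `ζ` to one of those `s` indices, because then
`x k ⬝ᵥ θs t = y k = x k ⬝ᵥ θs s`, against the separation hypothesis `hx`. So the
`n + (n - 1) * (S - 1 - s) = (n - 1) * (S - s) + 1` samples of subsystem `s` are distributed among
at most `S - s` indices, and by the pigeonhole principle some index `j` receives `n` of them.
On these `n` samples `θ j` and `θs s` give the same outputs, and invertibility of their Gram matrix
forces `θ j = θs s` (`eq_of_isUnit_gram`).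

The resulting map `σ` is injective since the `θs s` are distinct, hence a permutation, and the
separation hypothesis then determines `ζ`.
-/

theorem eq_of_isUnit_gram {n N : ℕ} (x : Fin N → Fin n → ℝ) (A : Finset (Fin N))
    (hA : IsUnit (∑ k ∈ A, vecMulVec (x k) (x k))) (u v : Fin n → ℝ)
    (huv : ∀ k ∈ A, x k ⬝ᵥ u = x k ⬝ᵥ v) : u = v := by
  apply Matrix.mulVec_injective_iff_isUnit.2 hA
  simp only [Matrix.sum_mulVec]
  refine Finset.sum_congr rfl fun k hk => ?_
  rw [Matrix.vecMulVec_mulVec, Matrix.vecMulVec_mulVec, huv k hk]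

/-- Theorem 3.3: with `|C*_s| = n + (n-1)(S-s)` samples per subsystem (so
`N = ((n-1)S² + (n+1)S)/2` in total) and every `n`-element subset of each `C*_s`
having an invertible Gram matrix, the regressors and membership indices are
persistently exciting for the switched linear system. -/
theorem stmt_3 {n S N : ℕ} (hn : 0 < n)
    (x : Fin N → Fin n → ℝ) (θs : Fin S → Fin n → ℝ) (ζs : Fin N → Fin S)
    (y : Fin N → ℝ) (hy : ∀ k, y k = x k ⬝ᵥ θs (ζs k))
    (hθ : ∀ i j, i ≠ j → θs i ≠ θs j)
    (hx : ∀ k, ∀ i j, i ≠ j → x k ⬝ᵥ (θs i - θs j) ≠ 0)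
    (hGram : ∀ s : Fin S, ∀ A ⊆ Finset.univ.filter (fun k => ζs k = s),
      A.card = n → IsUnit (∑ k ∈ A, vecMulVec (x k) (x k)))
    (hcard : ∀ s : Fin S,
      (Finset.univ.filter (fun k => ζs k = s)).card = n + (n - 1) * (S - 1 - s.val))
    (hN : 2 * N = (n - 1) * S ^ 2 + (n + 1) * S)
    (θ : Fin S → Fin n → ℝ) (ζ : Fin N → Fin S)
    (hfit : ∀ k, y k = x k ⬝ᵥ θ (ζ k)) :
    ∃ σ : Equiv.Perm (Fin S), (∀ s, θ (σ s) = θs s) ∧ ∀ k, ζ k = σ (ζs k) := by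
  have hsep : ∀ k t, θ (ζ k) = θs t → ζs k = t := by
    intro k t h
    by_contra hne
    apply hx k _ _ hne
    rw [dotProduct_sub, ← hy, hfit, h, sub_self]
  have hex : ∀ s : Fin S, ∃ j, θ j = θs s := by
    intro s
    induction s using WellFoundedLT.induction with
    | ind s ih =>
    choose! g hg using ih
    set C := Finset.univ.filter (fun k => ζs k = s) with hC
    set T := ((Finset.Iio s).image g)ᶜ with hT
    have hmaps : ∀ k ∈ C, ζ k ∈ T := by
      intro k hk
      simp only [hC, Finset.mem_filter, Finset.mem_univ, true_and] at hk
      simp only [hT, Finset.mem_compl, Finset.mem_image, Finset.mem_Iio, not_exists, not_and]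
      intro t ht hgt
      have := hsep k t (by rw [← hgt, hg t ht])
      exact ht.ne (this.symm.trans hk)
    have hinj : Set.InjOn g (Finset.Iio s : Finset (Fin S)) := by
      intro a ha b hb hab
      simp only [Finset.coe_Iio, Set.mem_Iio] at ha hb
      by_contra hne
      exact hθ a b hne (by rw [← hg a ha, ← hg b hb, hab])
    have hTcard : T.card = S - s.val := by
      rw [hT, Finset.card_compl, Finset.card_image_of_injOn hinj, Fin.card_Iio, Fintype.card_fin]
    have hlt : T.card * (n - 1) < C.card := by
      have hSs : S - s.val = (S - 1 - s.val) + 1 := by have := s.isLt; omega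
      rw [hTcard, hC, hcard s, hSs, add_mul, one_mul, mul_comm]
      omega
    obtain ⟨j, -, hj⟩ := Finset.exists_lt_card_fiber_of_mul_lt_card_of_maps_to hmaps hlt
    obtain ⟨A, hA, hAcard⟩ := Finset.exists_subset_card_eq
      (show n ≤ (C.filter fun k => ζ k = j).card by omega)
    refine ⟨j, eq_of_isUnit_gram x A
      (hGram s A (hA.trans (Finset.filter_subset _ _)) hAcard) _ _ fun k hk => ?_⟩
    have hkA := hA hk
    simp only [hC, Finset.mem_filter, Finset.mem_univ, true_and] at hkA
    rw [← hkA.1, ← hkA.2, ← hy, hfit]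
  choose σ hσ using hex
  have hσinj : Function.Injective σ := by
    intro a b hab
    by_contra hne
    exact hθ a b hne (by rw [← hσ a, ← hσ b, hab])
  have hσbij : Function.Bijective σ := Finite.injective_iff_bijective.1 hσinj
  refine ⟨Equiv.ofBijective σ hσbij, hσ, fun k => ?_⟩
  obtain ⟨t, ht⟩ := hσbij.2 (ζ k)
  have := hsep k t (by rw [← ht, hσ])
  rw [Equiv.ofBijective_apply, this, ht]
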